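/- (Weakly-universal models, arbitrary arity) Assume Σ_UID^rev and Σ_UFD are reversible. Then every finite instance I₀ satisfying Σ_UFD has a finite superinstance I that satisfies Σ_UID^rev ∪ Σ_UFD and is weakly-sound for Σ_UID^rev and I₀ (so reversible UIDs and UFDs have finite weakly-universal models for ACQs). -/

import Mathlib

namespace FQA

/-- A relational signature: a finite set of relation names, each with an arity `≥ 1`. -/
structure Sig where
  Rel : Type
  rel_fin : Finite Rel
  ar : Rel → ℕ
  ar_pos : ∀ R, 1 ≤ ar R

/-- The positions of a signature: pairs of a relation and an index into its arity. -/
abbrev Sig.Pos (σ : Sig) : Type := Σ R : σ.Rel, Fin (σ.ar R)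

/-- A fact `R(a₁, …, a_{ar R})` with elements from `α`. -/
abbrev Fact (σ : Sig) (α : Type) : Type := Σ R : σ.Rel, Fin (σ.ar R) → α

/-- An instance is a set of facts. -/
abbrev Inst (σ : Sig) (α : Type) : Type := Set (Fact σ α)

variable {σ : Sig} {α β : Type}

/-- Element `a` occurs at position `p` in some fact of the instance `I`. -/
def occursAt (I : Inst σ α) (p : σ.Pos) (a : α) : Prop :=
  ∃ t : Fin (σ.ar p.1) → α, (⟨p.1, t⟩ : Fact σ α) ∈ I ∧ t p.2 = a

/-- The active domain of an instance: the elements occurring in some fact. -/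
def activeDom (I : Inst σ α) : Set α :=
  {a | ∃ F : Fact σ α, F ∈ I ∧ ∃ i, F.2 i = a}

/-- A unary inclusion dependency `src ⊆ dst` (nontrivial: `src ≠ dst`). -/
structure UID (σ : Sig) where
  src : σ.Pos
  dst : σ.Pos
  ne : src ≠ dst

/-- The reverse of a UID. -/
def UID.rev (τ : UID σ) : UID σ := ⟨τ.dst, τ.src, τ.ne.symm⟩

/-- An instance satisfies a UID if every element occurring at `src` also occurs at `dst`. -/
def satUID (I : Inst σ α) (τ : UID σ) : Prop :=
  ∀ a, occursAt I τ.src a → occursAt I τ.dst a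

/-- A unary functional dependency `R^src → R^dst` (nontrivial: `src ≠ dst`). -/
structure UFD (σ : Sig) where
  rel : σ.Rel
  src : Fin (σ.ar rel)
  dst : Fin (σ.ar rel)
  ne : src ≠ dst

/-- The reverse of a UFD. -/
def UFD.rev (φ : UFD σ) : UFD σ := ⟨φ.rel, φ.dst, φ.src, φ.ne.symm⟩

/-- The source position of a UFD, as a position of the signature. -/
def UFD.posSrc (φ : UFD σ) : σ.Pos := ⟨φ.rel, φ.src⟩

/-- The target position of a UFD, as a position of the signature. -/
def UFD.posDst (φ : UFD σ) : σ.Pos := ⟨φ.rel, φ.dst⟩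

/-- An instance satisfies a UFD if any two facts of `rel` agreeing at `src` agree at `dst`. -/
def satUFD (I : Inst σ α) (φ : UFD σ) : Prop :=
  ∀ t u : Fin (σ.ar φ.rel) → α,
    (⟨φ.rel, t⟩ : Fact σ α) ∈ I → (⟨φ.rel, u⟩ : Fact σ α) ∈ I →
    t φ.src = u φ.src → t φ.dst = u φ.dst

/-- `a` wants to appear at position `p` in `I` (with respect to the UIDs `Su`): some
UID of `Su` with target `p` applies to `a`, and `a` does not yet occur at `p`. -/
def wants (Su : Set (UID σ)) (I : Inst σ α) (p : σ.Pos) (a : α) : Prop :=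
  (∃ τ ∈ Su, τ.dst = p ∧ occursAt I τ.src a) ∧ ¬ occursAt I p a

/-- `I` is a weakly-sound superinstance of `I₀` for the UIDs `Su`: elements of `I₀`
only appear at positions where they already appeared or wanted to appear, and new
elements only appear at positions related by UIDs of `Su` in both directions. -/
def WeaklySound (Su : Set (UID σ)) (I₀ I : Inst σ ℕ) : Prop :=
  (∀ a ∈ activeDom I₀, ∀ p : σ.Pos, occursAt I p a →
      occursAt I₀ p a ∨ wants Su I₀ p a) ∧
  (∀ a ∈ activeDom I, a ∉ activeDom I₀ → ∀ p q : σ.Pos,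
      occursAt I p a → occursAt I q a →
      p = q ∨ ∃ h : p ≠ q, (⟨p, q, h⟩ : UID σ) ∈ Su ∧ (⟨q, p, h.symm⟩ : UID σ) ∈ Su)

/-- A set of UIDs is transitively closed. -/
def TransClosedUID (Su : Set (UID σ)) : Prop :=
  ∀ τ ∈ Su, ∀ τ' ∈ Su, τ.dst = τ'.src →
    ∀ h : τ.src ≠ τ'.dst, (⟨τ.src, τ'.dst, h⟩ : UID σ) ∈ Su

/-- A set of UFDs is closed under UFD transitivity. -/
def TransClosedUFD (Sf : Set (UFD σ)) : Prop :=
  ∀ (R : σ.Rel) (i j k : Fin (σ.ar R)) (h1 : i ≠ j) (h2 : j ≠ k) (h3 : i ≠ k),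
    (⟨R, i, j, h1⟩ : UFD σ) ∈ Sf → (⟨R, j, k, h2⟩ : UFD σ) ∈ Sf →
    (⟨R, i, k, h3⟩ : UFD σ) ∈ Sf

/-- A position occurs in some UID of `Su`. -/
def occursInUIDs (Su : Set (UID σ)) (p : σ.Pos) : Prop :=
  ∃ τ ∈ Su, τ.src = p ∨ τ.dst = p

/-- The UIDs `Su` and UFDs `Sf` are reversible: both are closed under implication
(transitivity), every UID of `Su` has its reverse in `Su`, and every UFD of `Sf`
whose two positions occur in UIDs of `Su` has its reverse in `Sf`. -/
def Reversible (Su : Set (UID σ)) (Sf : Set (UFD σ)) : Prop :=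
  TransClosedUID Su ∧ TransClosedUFD Sf ∧
  (∀ τ ∈ Su, τ.rev ∈ Su) ∧
  (∀ φ ∈ Sf, occursInUIDs Su φ.posSrc → occursInUIDs Su φ.posDst → φ.rev ∈ Sf)

/-- Elements of the UID chase: base elements of the initial instance, and nulls.
The null `CEl.null x p r` is the fresh element placed at position `r` of the fact
created to satisfy the requirement that `x` appear at position `p`. -/
inductive CEl (σ : Sig) : Type
  | base : ℕ → CEl σ
  | null : CEl σ → σ.Pos → σ.Pos → CEl σ

/-- `Created I₀ Su x p` holds when the UID chase of `I₀` by the (transitively closed)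
UIDs `Su` creates a new fact whose exported element is `x`, placed at position `p`.
The first round is performed as a core-chase round: for each element of `I₀` and each
position where it wants to appear, a single new fact is created; afterwards, each
null introduced at a position `r` spawns one new fact for each UID of `Su` with
source `r`. -/
inductive Created (I₀ : Inst σ ℕ) (Su : Set (UID σ)) : CEl σ → σ.Pos → Prop
  | root (a : ℕ) (p : σ.Pos) :
      (∃ τ ∈ Su, τ.dst = p ∧ occursAt I₀ τ.src a) →
      ¬ occursAt I₀ p a →
      Created I₀ Su (CEl.base a) p
  | step (x : CEl σ) (p r q : σ.Pos) :
      Created I₀ Su x p → r.1 = p.1 → r ≠ p →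
      (∃ τ ∈ Su, τ.src = r ∧ τ.dst = q) →
      Created I₀ Su (CEl.null x p r) q

/-- The UID chase of `I₀` by `Su`: the facts of `I₀` (over base elements) together
with, for each requirement `(x, p)` that is created, the fact of relation `p.1` with
`x` at position `p` and fresh nulls at all other positions. -/
def chaseInst (I₀ : Inst σ ℕ) (Su : Set (UID σ)) : Inst σ (CEl σ) :=
  {F | (∃ F₀ : Fact σ ℕ, F₀ ∈ I₀ ∧ F = ⟨F₀.1, fun i => CEl.base (F₀.2 i)⟩) ∨
       (∃ (x : CEl σ) (p : σ.Pos), Created I₀ Su x p ∧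
          F = ⟨p.1, fun i => if i = p.2 then x else CEl.null x p ⟨p.1, i⟩⟩)}

theorem activeDom_finite {σ : Sig} {α : Type} {I : Inst σ α} (h : I.Finite) :
    (activeDom I).Finite := by
  have : activeDom I = ⋃ F ∈ I, Set.range F.2 := by
    ext a; simp [activeDom]
  rw [this]
  exact h.biUnion (fun F _ => Set.finite_range F.2)

theorem occursAt_mem {σ : Sig} {α : Type} {I : Inst σ α} {p : σ.Pos} {a : α}
    (h : occursAt I p a) : a ∈ activeDom I := by
  obtain ⟨t, ht, rfl⟩ := h
  exact ⟨_, ht, p.2, rfl⟩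

theorem pi_finite {σ : Sig} {α : Type} {I : Inst σ α} (h : I.Finite) (p : σ.Pos) :
    {a | occursAt I p a}.Finite :=
  (activeDom_finite h).subset fun _ ha => occursAt_mem ha

theorem pi_card_le {σ : Sig} {I : Inst σ ℕ} (hI : I.Finite) (φ : UFD σ) (h : satUFD I φ) :
    {a | occursAt I φ.posDst a}.ncard ≤ {a | occursAt I φ.posSrc a}.ncard := by
  classical
  have : ∀ a, ∃ b, ∀ t, (⟨φ.rel, t⟩ : Fact σ ℕ) ∈ I → t φ.src = a → t φ.dst = b := by
    intro a
    by_cases hh : ∃ t, (⟨φ.rel, t⟩ : Fact σ ℕ) ∈ I ∧ t φ.src = a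
    · obtain ⟨t, ht, hta⟩ := hh
      exact ⟨t φ.dst, fun u hu hua => h u t hu ht (hua.trans hta.symm)⟩
    · exact ⟨0, fun u hu hua => (hh ⟨u, hu, hua⟩).elim⟩
  choose g hg using this
  have hsub : {a | occursAt I φ.posDst a} ⊆ g '' {a | occursAt I φ.posSrc a} := by
    rintro a ⟨t, ht, rfl⟩
    exact ⟨t φ.src, ⟨t, ht, rfl⟩, (hg _ t ht rfl).symm⟩
  exact (Set.ncard_le_ncard hsub ((pi_finite hI _).image _)).trans
    (Set.ncard_image_le (pi_finite hI _))

/-- The completion argument, from abstract data `T` (allowed elements) and `E` (targets). -/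
theorem completion {σ : Sig} (Su : Set (UID σ)) (Sf : Set (UFD σ))
    (hrev : Reversible Su Sf) (T : σ.Pos → Set ℕ) (hT : ∀ p, (T p).Infinite)
    (E : σ.Pos → Finset ℕ) (N : ℕ) (hN : 0 < N) (hE : ∀ p, (E p).card = N)
    (hET : ∀ p, (E p : Set ℕ) ⊆ T p) (n : ℕ) :
    ∀ (I : Inst σ ℕ), I.Finite → (∀ φ ∈ Sf, satUFD I φ) →
      (∀ p a, occursAt I p a → a ∈ T p ∧ (occursInUIDs Su p → a ∈ E p)) →
      {x : σ.Pos × ℕ | occursInUIDs Su x.1 ∧ x.2 ∈ E x.1 ∧ ¬ occursAt I x.1 x.2}.ncard = n →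
      ∃ J : Inst σ ℕ, I ⊆ J ∧ J.Finite ∧ (∀ φ ∈ Sf, satUFD J φ) ∧
        (∀ p a, occursAt J p a → a ∈ T p ∧ (occursInUIDs Su p → a ∈ E p)) ∧
        (∀ p, occursInUIDs Su p → ∀ a ∈ E p, occursAt J p a) := by
  classical
  haveI := σ.rel_fin
  induction n using Nat.strong_induction_on with
  | _ n ih =>
  intro I hI hS hA hn
  by_cases hmiss : ∀ p, occursInUIDs Su p → ∀ a ∈ E p, occursAt I p a
  · exact ⟨I, subset_rfl, hI, hS, hA, hmiss⟩
  push Not at hmiss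
  obtain ⟨⟨R, p⟩, hp, a, haE, hna⟩ := hmiss
  obtain ⟨-, hftr, -, hfrev⟩ := hrev
  -- template
  have htemp : ∃ t : Fin (σ.ar R) → ℕ,
      (∀ i, t i ∈ T ⟨R, i⟩ ∧ (occursInUIDs Su ⟨R, i⟩ → t i ∈ E ⟨R, i⟩)) ∧
      ∀ u, (⟨R, u⟩ : Fact σ ℕ) ∈ I → (⟨R, t⟩ : Fact σ ℕ) ∈ I := by
    by_cases h : ∃ t, (⟨R, t⟩ : Fact σ ℕ) ∈ I
    · obtain ⟨t, ht⟩ := h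
      exact ⟨t, fun i => hA ⟨R, i⟩ (t i) ⟨t, ht, rfl⟩, fun _ _ => ht⟩
    · have : ∀ i : Fin (σ.ar R), ∃ b, b ∈ E ⟨R, i⟩ := fun i => by
        have : (E ⟨R, i⟩).Nonempty := by
          rw [← Finset.card_pos, hE]; exact hN
        exact this
      choose t ht using this
      exact ⟨t, fun i => ⟨hET _ (ht i), fun _ => ht i⟩, fun u hu => (h ⟨u, hu⟩).elim⟩
  obtain ⟨t, htA, htI⟩ := htemp
  let Y : Fin (σ.ar R) → Prop := fun i => i = p ∨ ∃ h : i ≠ p, (⟨R, i, p, h⟩ : UFD σ) ∈ Sf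
  have hcardp : {b | occursAt I ⟨R, p⟩ b}.ncard < N := by
    rw [← hE ⟨R, p⟩, ← Set.ncard_coe_finset]
    apply Set.ncard_lt_ncard _ (Finset.finite_toSet _)
    refine ⟨fun b hb => (hA _ _ hb).2 hp, fun h => hna (h haE)⟩
  have hnew : ∀ i, ∃ b, (Y i → b ∈ T ⟨R, i⟩ ∧ (occursInUIDs Su ⟨R, i⟩ → b ∈ E ⟨R, i⟩) ∧
      ¬ occursAt I ⟨R, i⟩ b) := by
    intro i
    by_cases hY : Y i
    swap
    · exact ⟨0, fun h => (hY h).elim⟩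
    by_cases hU : occursInUIDs Su ⟨R, i⟩
    · have hci : {b | occursAt I ⟨R, i⟩ b}.ncard < N := by
        rcases hY with rfl | ⟨h, hf⟩
        · exact hcardp
        · exact (pi_card_le hI _ (hS _ (hfrev _ hf hU hp))).trans_lt hcardp
      rw [← hE ⟨R, i⟩, ← Set.ncard_coe_finset] at hci
      obtain ⟨b, hb, hb'⟩ := Set.exists_mem_notMem_of_ncard_lt_ncard hci (pi_finite hI _)
      exact ⟨b, fun _ => ⟨hET _ hb, fun _ => hb, hb'⟩⟩
    · obtain ⟨b, hb, hb'⟩ := (hT ⟨R, i⟩).exists_notMem_finite (pi_finite hI ⟨R, i⟩)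
      exact ⟨b, fun _ => ⟨hb, fun h => (hU h).elim, hb'⟩⟩
  choose d hd using hnew
  let s : Fin (σ.ar R) → ℕ := fun i => if Y i then d i else t i
  have hsA : ∀ i, s i ∈ T ⟨R, i⟩ ∧ (occursInUIDs Su ⟨R, i⟩ → s i ∈ E ⟨R, i⟩) := by
    intro i
    by_cases hY : Y i
    · simp only [s, if_pos hY]; exact ⟨(hd i hY).1, (hd i hY).2.1⟩
    · simp only [s, if_neg hY]; exact htA i
  let I' : Inst σ ℕ := insert ⟨R, s⟩ I
  have hII' : I ⊆ I' := Set.subset_insert _ _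
  have hmono : ∀ q b, occursAt I q b → occursAt I' q b := by
    rintro q b ⟨u, hu, h⟩; exact ⟨u, hII' hu, h⟩
  have key : ∀ (i j : Fin (σ.ar R)) (h : i ≠ j), (⟨R, i, j, h⟩ : UFD σ) ∈ Sf →
      ∀ u, (⟨R, u⟩ : Fact σ ℕ) ∈ I → s i = u i → s j = u j := by
    intro i j h hf u hu hsu
    by_cases hY : Y i
    · exfalso
      simp only [s, if_pos hY] at hsu
      exact (hd i hY).2.2 ⟨u, hu, hsu.symm⟩
    · have hYj : ¬ Y j := by
        rintro (rfl | ⟨h2, hf2⟩)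
        · exact hY (Or.inr ⟨h, hf⟩)
        · have hip : i ≠ p := fun e => hY (Or.inl e)
          exact hY (Or.inr ⟨hip, hftr R i j p h h2 hip hf hf2⟩)
      simp only [s, if_neg hY, if_neg hYj] at hsu ⊢
      exact hS _ hf t u (htI u hu) hu hsu
  have hS' : ∀ φ ∈ Sf, satUFD I' φ := by
    rintro ⟨R', i, j, h⟩ hf u v hu hv huv
    simp only at u v hu hv huv ⊢
    rcases hu with hu | hu <;> rcases hv with hv | hv
    · obtain ⟨rfl, hu⟩ := Sigma.mk.inj hu
      obtain ⟨-, hv⟩ := Sigma.mk.inj hv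
      rw [eq_of_heq hu, eq_of_heq hv]
    · obtain ⟨rfl, hu⟩ := Sigma.mk.inj hu
      obtain rfl := eq_of_heq hu
      exact key i j h hf v hv huv
    · obtain ⟨rfl, hv⟩ := Sigma.mk.inj hv
      obtain rfl := eq_of_heq hv
      exact (key i j h hf u hu huv.symm).symm
    · exact hS _ hf u v hu hv huv
  have hA' : ∀ q b, occursAt I' q b → b ∈ T q ∧ (occursInUIDs Su q → b ∈ E q) := by
    rintro ⟨R', i⟩ b ⟨u, hu, hb⟩
    rcases hu with hu | hu
    · obtain ⟨rfl, hu⟩ := Sigma.mk.inj hu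
      obtain rfl := eq_of_heq hu
      subst hb
      exact hsA i
    · exact hA _ _ ⟨u, hu, hb⟩
  have hYp : Y p := Or.inl rfl
  have hlt : {x : σ.Pos × ℕ | occursInUIDs Su x.1 ∧ x.2 ∈ E x.1 ∧
      ¬ occursAt I' x.1 x.2}.ncard < n := by
    rw [← hn]
    apply Set.ncard_lt_ncard
    · refine ⟨fun x hx => ⟨hx.1, hx.2.1, fun h => hx.2.2 (hmono _ _ h)⟩, fun h => ?_⟩
      have h1 := @h (⟨R, p⟩, d p) ⟨hp, (hd p hYp).2.1 hp, (hd p hYp).2.2⟩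
      refine h1.2.2 ⟨s, Set.mem_insert _ _, ?_⟩
      simp only [s, if_pos hYp]
    · apply Set.Finite.subset (s := ⋃ q : σ.Pos, (fun b => (q, b)) '' (E q : Set ℕ))
      · exact Set.finite_iUnion fun q => (Finset.finite_toSet _).image _
      · rintro ⟨q, b⟩ hx
        exact Set.mem_iUnion.2 ⟨q, b, hx.2.1, rfl⟩
  obtain ⟨J, h1, h2⟩ := ih _ hlt I' (hI.insert _) hS' hA' rfl
  exact ⟨J, hII'.trans h1, h2⟩

/-- **Weakly-universal models, arbitrary arity.** For reversible UIDs `Su` and UFDs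
`Sf`, assuming no useless relations (every relation occurs in some fact of the UID
chase of `I₀` by `Su`), every finite instance `I₀` satisfying `Sf` has a finite
superinstance satisfying `Su ∪ Sf` which is weakly-sound for `Su` and `I₀`. -/
theorem weakly_universal_models
    {σ : Sig} (Su : Set (UID σ)) (Sf : Set (UFD σ))
    (hrev : Reversible Su Sf)
    (I₀ : Inst σ ℕ) (hfin : I₀.Finite)
    (hsat : ∀ φ ∈ Sf, satUFD I₀ φ)
    (huseful : ∀ R : σ.Rel, ∃ t : Fin (σ.ar R) → CEl σ,
        (⟨R, t⟩ : Fact σ (CEl σ)) ∈ chaseInst I₀ Su) :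
    ∃ I : Inst σ ℕ, I₀ ⊆ I ∧ I.Finite ∧
      (∀ τ ∈ Su, satUID I τ) ∧ (∀ φ ∈ Sf, satUFD I φ) ∧
      WeaklySound Su I₀ I := by
  classical
  haveI := σ.rel_fin
  obtain ⟨enc, henc⟩ := Countable.exists_injective_nat σ.Pos
  let Q : σ.Pos → σ.Pos → Prop := fun p q => p = q ∨ ∃ h : p ≠ q, (⟨p, q, h⟩ : UID σ) ∈ Su
  have hQs : ∀ p q, Q p q → Q q p := by
    rintro p q (rfl | ⟨h, hu⟩)
    · exact Or.inl rfl
    · exact Or.inr ⟨h.symm, hrev.2.2.1 _ hu⟩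
  have hQt : ∀ p q r, Q p q → Q q r → Q p r := by
    rintro p q r (rfl | ⟨h, hu⟩) h2
    · exact h2
    rcases h2 with rfl | ⟨h', hu'⟩
    · exact Or.inr ⟨h, hu⟩
    by_cases e : p = r
    · exact Or.inl e
    · exact Or.inr ⟨e, hrev.1 _ hu _ hu' rfl e⟩
  have hDf : (activeDom I₀).Finite := activeDom_finite hfin
  let T : σ.Pos → Set ℕ := fun p => {a | (a ∈ activeDom I₀ ∧ ∃ q, Q q p ∧ occursAt I₀ q a) ∨
    (a ∉ activeDom I₀ ∧ ∃ q, Q q p ∧ enc q = (Nat.unpair a).1)}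
  have hTQ : ∀ p q, Q p q → T p = T q := by
    have : ∀ p q, Q p q → T p ⊆ T q := by
      rintro p q h a (⟨h1, r, h2, h3⟩ | ⟨h1, r, h2, h3⟩)
      · exact Or.inl ⟨h1, r, hQt _ _ _ h2 h, h3⟩
      · exact Or.inr ⟨h1, r, hQt _ _ _ h2 h, h3⟩
    exact fun p q h => (this p q h).antisymm (this q p (hQs _ _ h))
  have hTinf : ∀ p, (T p).Infinite := by
    intro p
    have h1 : (Set.range fun n => Nat.pair (enc p) n).Infinite := by
      apply Set.infinite_range_of_injective
      intro a b hab
      exact (Nat.pair_eq_pair.1 hab).2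
    apply (h1.diff hDf).mono
    rintro _ ⟨⟨n, rfl⟩, hn⟩
    exact Or.inr ⟨hn, p, Or.inl rfl, by simp⟩
  have hF : ∀ S : Set ℕ, ∃ F : Finset ℕ, S.Infinite → (F : Set ℕ) ⊆ S ∧
      S ∩ activeDom I₀ ⊆ F ∧ F.card = (activeDom I₀).ncard + 1 := by
    intro S
    by_cases hS : S.Infinite
    swap
    · exact ⟨∅, fun h => (hS h).elim⟩
    have hfi : (S ∩ activeDom I₀).Finite := hDf.inter_of_right S
    obtain ⟨F, h1, h2, h3⟩ := hS.exists_superset_ncard_eq (s := S ∩ activeDom I₀)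
      Set.inter_subset_left hfi (k := (activeDom I₀).ncard + 1)
      ((Set.ncard_le_ncard Set.inter_subset_right hDf).trans (Nat.le_succ _))
    have hFf : F.Finite := Set.finite_of_ncard_pos (by omega)
    refine ⟨hFf.toFinset, fun _ => ⟨by simpa using h2, by simpa using h1, ?_⟩⟩
    rw [← h3, Set.ncard_eq_toFinset_card F hFf]
  choose F hF using hF
  have hI0 : ∀ p a, occursAt I₀ p a → a ∈ T p := fun p a h =>
    Or.inl ⟨occursAt_mem h, p, Or.inl rfl, h⟩
  obtain ⟨J, h1, h2, h3, h4, h5⟩ := completion Su Sf hrev T hTinf (fun p => F (T p)) _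
    (Nat.succ_pos _) (fun p => (hF _ (hTinf p)).2.2) (fun p => (hF _ (hTinf p)).1) _ I₀ hfin hsat
    (fun p a h => ⟨hI0 p a h, fun _ => (hF _ (hTinf p)).2.1 ⟨hI0 p a h, occursAt_mem h⟩⟩) rfl
  refine ⟨J, h1, h2, ?_, h3, ?_, ?_⟩
  · intro τ hτ a ha
    have hE := (h4 _ _ ha).2 ⟨τ, hτ, Or.inl rfl⟩
    apply h5 _ ⟨τ, hτ, Or.inr rfl⟩
    rwa [← hTQ τ.src τ.dst (Or.inr ⟨τ.ne, hτ⟩)]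
  · intro a ha p hp
    rcases (h4 _ _ hp).1 with ⟨-, q, hq, ho⟩ | ⟨h, -⟩
    · by_cases hc : occursAt I₀ p a
      · exact Or.inl hc
      · right
        rcases hq with rfl | ⟨hne, hu⟩
        · exact (hc ho).elim
        · exact ⟨⟨_, hu, rfl, ho⟩, hc⟩
    · exact (h ha).elim
  · intro a _ ha p q hp hq
    rcases (h4 _ _ hp).1 with ⟨h, -⟩ | ⟨-, r, hr, he⟩
    · exact (ha h).elim
    rcases (h4 _ _ hq).1 with ⟨h, -⟩ | ⟨-, r', hr', he'⟩
    · exact (ha h).elim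
    obtain rfl := henc (he.trans he'.symm)
    rcases hQt _ _ _ (hQs _ _ hr) hr' with h | ⟨h, hu⟩
    · exact Or.inl h
    · exact Or.inr ⟨h, hu, hrev.2.2.1 _ hu⟩

end FQA
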